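/- Let (X, 𝒜, ν) be a measure space with ν a finite measure, K a real Hilbert space, M > 0, v : X → K measurable with ‖v(x)‖_K ≤ M for ν-a.e. x, and λ > 4M². For pairs (f, F), (g, G) with f, g ∈ L²(ν;ℝ) and F, G ∈ L²(ν;K), define the bilinear form E((f,F),(g,G)) := (1/2) ∫_X ⟨F(x), G(x)⟩ ν(dx) − ∫_X ⟨v(x), F(x)⟩ g(x) ν(dx) + (1+λ) ∫_X f(x) g(x) ν(dx). Then there exists K₀ > 0, depending only on M and λ, such that for all such pairs: |E((f,F),(g,G))| ≤ K₀ · E((f,F),(f,F))^{1/2} · E((g,G),(g,G))^{1/2} (the weak sector condition). -/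

import Mathlib

open MeasureTheory
open scoped InnerProductSpace

/-- Pointwise inequality behind the sector condition. -/
theorem weak_sector_pointwise {K : Type*} [NormedAddCommGroup K] [InnerProductSpace ℝ K]
    (M : ℝ) (hM : 0 < M) (lam : ℝ) (hlam : 4 * M ^ 2 < lam) (v F G : K) (hv : ‖v‖ ≤ M)
    (f g t : ℝ) :
    0 ≤ t ^ 2 * ((1/2) * ⟪F, F⟫_ℝ - ⟪v, F⟫_ℝ * f + (1 + lam) * (f * f))
      - t * (1/4) * ((1/2) * ⟪F, G⟫_ℝ - ⟪v, F⟫_ℝ * g + (1 + lam) * (f * g))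
      + ((1/2) * ⟪G, G⟫_ℝ - ⟪v, G⟫_ℝ * g + (1 + lam) * (g * g)) := by
  obtain ⟨s, hs0, hs⟩ : ∃ s : ℝ, 0 ≤ s ∧ s ^ 2 = 1 + lam :=
    ⟨Real.sqrt (1 + lam), Real.sqrt_nonneg _, Real.sq_sqrt (by nlinarith [sq_nonneg M])⟩
  have hMs : M ≤ s / 2 := by nlinarith
  have key : ∀ (H : K) (a : ℝ), |⟪v, H⟫_ℝ * a| ≤ (1/2) * (‖H‖ * (s * |a|)) := by
    intro H a
    rw [abs_mul]
    have h1 : |⟪v, H⟫_ℝ| ≤ (s / 2) * ‖H‖ :=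
      (abs_real_inner_le_norm v H).trans
        (mul_le_mul_of_nonneg_right (hv.trans hMs) (norm_nonneg _))
    calc _ ≤ (s / 2 * ‖H‖) * |a| := mul_le_mul_of_nonneg_right h1 (abs_nonneg _)
      _ = _ := by ring
  have dia : ∀ (H : K) (a : ℝ), (1/4) * (‖H‖ ^ 2 + (s * |a|) ^ 2) ≤
      (1/2) * ⟪H, H⟫_ℝ - ⟪v, H⟫_ℝ * a + (1 + lam) * (a * a) := by
    intro H a
    have h1 := (le_abs_self _).trans (key H a)
    have h2 : (1 + lam) * (a * a) = (s * |a|) ^ 2 := by rw [mul_pow, sq_abs, hs]; ring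
    rw [real_inner_self_eq_norm_sq, h2]
    nlinarith [sq_nonneg (‖H‖ - s * |a|)]
  have off : |(1/2) * ⟪F, G⟫_ℝ - ⟪v, F⟫_ℝ * g + (1 + lam) * (f * g)| ≤
      (1/2) * (‖F‖ * ‖G‖) + (1/2) * (‖F‖ * (s * |g|)) + (s * |f|) * (s * |g|) := by
    have h1 := abs_le.1 (abs_real_inner_le_norm F G)
    have h2 := abs_le.1 (key F g)
    have h3 : |(1 + lam) * (f * g)| ≤ (s * |f|) * (s * |g|) := by
      rw [← hs, abs_mul, abs_mul, abs_of_nonneg (sq_nonneg s)]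
      exact le_of_eq (by ring)
    have h3 := abs_le.1 h3
    rw [abs_le]
    constructor <;> linarith [h1.1, h1.2, h2.1, h2.2, h3.1, h3.2]
  have hF := mul_le_mul_of_nonneg_left (dia F f) (sq_nonneg t)
  have hG := dia G g
  have hE := mul_le_mul_of_nonneg_left off (abs_nonneg t)
  rw [← abs_mul] at hE
  have hE := (le_abs_self _).trans hE
  have ht : t ^ 2 = |t| ^ 2 := (sq_abs t).symm
  generalize (1/2) * ⟪F, F⟫_ℝ - ⟪v, F⟫_ℝ * f + (1 + lam) * (f * f) = A at *
  generalize (1/2) * ⟪F, G⟫_ℝ - ⟪v, F⟫_ℝ * g + (1 + lam) * (f * g) = B at *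
  generalize (1/2) * ⟪G, G⟫_ℝ - ⟪v, G⟫_ℝ * g + (1 + lam) * (g * g) = C at *
  rw [ht] at hF ⊢
  generalize s * |f| = r at *
  generalize s * |g| = r' at *
  nlinarith [sq_nonneg (|t| * ‖F‖ - ‖G‖), sq_nonneg (|t| * ‖F‖ - r'), sq_nonneg (|t| * r - r'),
    sq_nonneg (|t| * ‖F‖), sq_nonneg (|t| * r), sq_nonneg r', sq_nonneg ‖G‖]

/-- Weak sector condition for the bilinear form
`E((f,F),(g,G)) = (1/2)∫⟪F,G⟫ − ∫⟪v,F⟫ g + (1+λ)∫ f g`: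
there exists `K₀ > 0` depending only on `M` and `λ` with
`|E((f,F),(g,G))| ≤ K₀ E((f,F),(f,F))^{1/2} E((g,G),(g,G))^{1/2}`. -/
theorem weak_sector_condition
    {X : Type*} [MeasurableSpace X] (ν : Measure X) [IsFiniteMeasure ν]
    {K : Type*} [NormedAddCommGroup K] [InnerProductSpace ℝ K]
    (M : ℝ) (hM : 0 < M)
    (lam : ℝ) (hlam : 4 * M ^ 2 < lam) :
    ∃ K₀ : ℝ, 0 < K₀ ∧
      ∀ (v : X → K), AEStronglyMeasurable v ν → (∀ᵐ x ∂ν, ‖v x‖ ≤ M) →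
      ∀ (f g : X → ℝ), MemLp f 2 ν → MemLp g 2 ν →
      ∀ (F G : X → K), MemLp F 2 ν → MemLp G 2 ν →
        |(1/2) * (∫ x, ⟪F x, G x⟫_ℝ ∂ν) - (∫ x, ⟪v x, F x⟫_ℝ * g x ∂ν)
            + (1 + lam) * ∫ x, f x * g x ∂ν|
          ≤ K₀ * Real.sqrt ((1/2) * (∫ x, ⟪F x, F x⟫_ℝ ∂ν)
                - (∫ x, ⟪v x, F x⟫_ℝ * f x ∂ν) + (1 + lam) * ∫ x, f x * f x ∂ν)
              * Real.sqrt ((1/2) * (∫ x, ⟪G x, G x⟫_ℝ ∂ν)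
                - (∫ x, ⟪v x, G x⟫_ℝ * g x ∂ν) + (1 + lam) * ∫ x, g x * g x ∂ν) := by
  refine ⟨8, by norm_num, ?_⟩
  intro v hv hvM f g hf hg F G hF hG
  have iIn : ∀ (F G : X → K), MemLp F 2 ν → MemLp G 2 ν →
      Integrable (fun x => ⟪F x, G x⟫_ℝ) ν := fun F G hF hG =>
    (hF.norm.integrable_mul hG.norm).mono' (hF.1.inner hG.1)
      (Filter.Eventually.of_forall fun x => norm_inner_le_norm _ _)
  have iMu : ∀ (f g : X → ℝ), MemLp f 2 ν → MemLp g 2 ν →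
      Integrable (fun x => f x * g x) ν := fun f g hf hg => hf.integrable_mul hg
  have iV : ∀ (F : X → K) (g : X → ℝ), MemLp F 2 ν → MemLp g 2 ν →
      Integrable (fun x => ⟪v x, F x⟫_ℝ * g x) ν := by
    intro F g hF hg
    refine ((hF.norm.integrable_mul hg.norm).const_mul M).mono' ((hv.inner hF.1).mul hg.1) ?_
    filter_upwards [hvM] with x hx
    rw [norm_mul]
    calc _ ≤ (M * ‖F x‖) * ‖g x‖ := mul_le_mul_of_nonneg_right
          ((norm_inner_le_norm _ _).trans (mul_le_mul_of_nonneg_right hx (norm_nonneg _)))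
          (norm_nonneg _)
      _ = _ := by simp [mul_assoc]
  have iE : ∀ (F G : X → K) (f g : X → ℝ), MemLp F 2 ν → MemLp G 2 ν → MemLp f 2 ν →
      MemLp g 2 ν → Integrable
        (fun x => (1/2) * ⟪F x, G x⟫_ℝ - ⟪v x, F x⟫_ℝ * g x + (1 + lam) * (f x * g x)) ν :=
    fun F G f g hF hG hf hg =>
      (((iIn F G hF hG).const_mul _).sub (iV F g hF hg)).add ((iMu f g hf hg).const_mul _)
  have eE : ∀ (F G : X → K) (f g : X → ℝ), MemLp F 2 ν → MemLp G 2 ν → MemLp f 2 ν →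
      MemLp g 2 ν → (1/2) * (∫ x, ⟪F x, G x⟫_ℝ ∂ν) - (∫ x, ⟪v x, F x⟫_ℝ * g x ∂ν)
            + (1 + lam) * ∫ x, f x * g x ∂ν = ∫ x,
        ((1/2) * ⟪F x, G x⟫_ℝ - ⟪v x, F x⟫_ℝ * g x + (1 + lam) * (f x * g x)) ∂ν := by
    intro F G f g hF hG hf hg
    have i0 : Integrable (fun x => (1/2) * ⟪F x, G x⟫_ℝ - ⟪v x, F x⟫_ℝ * g x) ν :=
      ((iIn F G hF hG).const_mul _).sub (iV F g hF hg)
    rw [integral_add i0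
      ((iMu f g hf hg).const_mul _), integral_sub ((iIn F G hF hG).const_mul _) (iV F g hF hg),
      integral_const_mul, integral_const_mul]
  rw [eE F G f g hF hG hf hg, eE F F f f hF hF hf hf, eE G G g g hG hG hg hg]
  have i1 := iE F G f g hF hG hf hg
  have i2 := iE F F f f hF hF hf hf
  have i3 := iE G G g g hG hG hg hg
  have quad : ∀ t : ℝ, 0 ≤ t ^ 2 * (∫ x,
        ((1/2) * ⟪F x, F x⟫_ℝ - ⟪v x, F x⟫_ℝ * f x + (1 + lam) * (f x * f x)) ∂ν)
      - t * (1/4) * (∫ x,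
        ((1/2) * ⟪F x, G x⟫_ℝ - ⟪v x, F x⟫_ℝ * g x + (1 + lam) * (f x * g x)) ∂ν)
      + ∫ x, ((1/2) * ⟪G x, G x⟫_ℝ - ⟪v x, G x⟫_ℝ * g x + (1 + lam) * (g x * g x)) ∂ν := by
    intro t
    have i0 : Integrable (fun x =>
        t ^ 2 * ((1/2) * ⟪F x, F x⟫_ℝ - ⟪v x, F x⟫_ℝ * f x + (1 + lam) * (f x * f x))
        - t * (1/4) * ((1/2) * ⟪F x, G x⟫_ℝ - ⟪v x, F x⟫_ℝ * g x + (1 + lam) * (f x * g x))) ν :=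
      (i2.const_mul _).sub (i1.const_mul _)
    rw [← integral_const_mul, ← integral_const_mul,
      ← integral_sub (i2.const_mul _) (i1.const_mul _),
      ← integral_add i0 i3]
    apply integral_nonneg_of_ae
    filter_upwards [hvM] with x hx
    exact weak_sector_pointwise M hM lam hlam (v x) (F x) (G x) hx (f x) (g x) t
  generalize (∫ x, ((1/2) * ⟪F x, F x⟫_ℝ - ⟪v x, F x⟫_ℝ * f x
    + (1 + lam) * (f x * f x)) ∂ν) = A at *
  generalize (∫ x, ((1/2) * ⟪F x, G x⟫_ℝ - ⟪v x, F x⟫_ℝ * g x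
    + (1 + lam) * (f x * g x)) ∂ν) = B at *
  generalize (∫ x, ((1/2) * ⟪G x, G x⟫_ℝ - ⟪v x, G x⟫_ℝ * g x
    + (1 + lam) * (g x * g x)) ∂ν) = C at *
  have hC : 0 ≤ C := by simpa using quad 0
  have hd : discrim A (-(1/4) * B) C ≤ 0 := discrim_le_zero fun t => by
    have := quad t
    linarith
  unfold discrim at hd
  rw [mul_assoc, ← Real.sqrt_mul' A hC]
  have h : |B / 8| ≤ Real.sqrt (A * C) := Real.abs_le_sqrt (by nlinarith)
  rw [abs_div, abs_of_pos (by norm_num : (0:ℝ) < 8)] at h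
  linarith
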